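/- The group of 8×8 integer matrices generated by B (rows (2,-1,-1,-1,0,0,0,1), (1,0,-1,-1,0,0,0,1), (1,-1,0,-1,0,0,0,1), (1,-1,-1,0,0,0,0,1), (0,0,0,0,1,0,0,0), (0,0,0,0,0,1,0,0), (0,0,0,0,0,0,1,0), (0,0,0,0,0,0,0,1)) and the five permutation matrices S₁,…,S₅ (Sₖ swaps coordinates k+1 and k+2) is isomorphic to the Weyl group W(E₆), of order 51840. -/

import Mathlib

/-- The 8×8 permutation matrix swapping coordinates `k` and `l` (0-indexed). -/
def swapMatrix8 (k : Fin 8) (l : Fin 8) : Matrix (Fin 8) (Fin 8) ℤ :=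
  fun i j => if (Equiv.swap k l) i = j then 1 else 0

open scoped Matrix

/-- The standard Coxeter system of type `E₆`. -/
noncomputable def csE6 : CoxeterSystem CoxeterMatrix.E₆ CoxeterMatrix.E₆.Group :=
  CoxeterMatrix.E₆.toCoxeterSystem

/-- Adjacency in the Dynkin diagram of `E₆`. -/
def adjE6 (i j : Fin 6) : Bool := decide (CoxeterMatrix.E₆.M i j = 3)

lemma braid_comm (i j : Fin 6) (hij : i ≠ j) (h : adjE6 i j = false) :
    csE6.simple i * csE6.simple j = csE6.simple j * csE6.simple i := by
  have h2 : CoxeterMatrix.E₆.M i j = 2 := by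
    have key : ∀ i j : Fin 6, i = j ∨ adjE6 i j = true ∨ Nat.beq (CoxeterMatrix.E₆.M i j) 2 = true := by
      decide
    rcases key i j with h' | h' | h'
    · exact absurd h' hij
    · rw [h] at h'; cases h'
    · exact Nat.eq_of_beq_eq_true h'
  have h3 := csE6.simple_mul_simple_pow i j
  change _ ^ (CoxeterMatrix.E₆.M i j) = _ at h3
  rw [h2, pow_two] at h3
  have := eq_inv_of_mul_eq_one_left h3
  rw [this]; simp

lemma braid_three (i j : Fin 6) (h : adjE6 i j = true) :
    csE6.simple i * csE6.simple j * csE6.simple i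
      = csE6.simple j * csE6.simple i * csE6.simple j := by
  have h2 : CoxeterMatrix.E₆.M i j = 3 := by simpa [adjE6] using h
  have h3 := csE6.simple_mul_simple_pow i j
  change _ ^ (CoxeterMatrix.E₆.M i j) = _ at h3
  rw [h2, pow_three] at h3
  have h4 : (csE6.simple i * csE6.simple j * csE6.simple i) *
    (csE6.simple j * csE6.simple i * csE6.simple j) = 1 := by
    rw [← h3]; simp only [mul_assoc]
  rw [eq_inv_of_mul_eq_one_left h4]
  simp [mul_assoc]

/-- Try to write the word `w` as `s` times another word (`n` is fuel). -/
def extractLetter : ℕ → Fin 6 → List (Fin 6) → Option (List (Fin 6))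
  | 0, _, _ => none
  | _ + 1, _, [] => none
  | n + 1, s, t :: w =>
    if s = t then some w
    else match extractLetter n s w with
      | none => none
      | some w1 =>
        if adjE6 s t then
          match extractLetter n t w1 with
          | none => none
          | some w2 => some (t :: s :: w2)
        else some (t :: w1)

lemma extractLetter_sound (n : ℕ) : ∀ (s : Fin 6) (w w' : List (Fin 6)),
    extractLetter n s w = some w' → csE6.wordProd w = csE6.simple s * csE6.wordProd w' := by
  induction n with
  | zero => intro s w w' h; simp [extractLetter] at h
  | succ n ih =>
    intro s w w' h
    cases w with
    | nil => simp [extractLetter] at h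
    | cons t w =>
      rw [extractLetter] at h
      by_cases hst : s = t
      · rw [if_pos hst] at h
        cases h; subst hst; simp [csE6.wordProd_cons]
      · rw [if_neg hst] at h
        cases hw1 : extractLetter n s w with
        | none => simp [hw1] at h
        | some w1 =>
          have e1 := ih _ _ _ hw1
          simp only [hw1] at h
          by_cases ha : adjE6 s t = true
          · rw [if_pos ha] at h
            cases hw2 : extractLetter n t w1 with
            | none => simp [hw2] at h
            | some w2 =>
              have e2 := ih _ _ _ hw2
              simp only [hw2] at h
              cases h
              simp only [csE6.wordProd_cons, e1, e2, ← mul_assoc]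
              rw [braid_three s t ha]
          · rw [if_neg ha] at h
            cases h
            simp only [csE6.wordProd_cons, e1, ← mul_assoc]
            rw [braid_comm s t hst (by simpa using ha)]

/-- A sound test for equality of two words in the Coxeter group. -/
def eqWord : List (Fin 6) → List (Fin 6) → Bool
  | [], w => w.isEmpty
  | s :: u, w =>
    match extractLetter w.length s w with
    | none => false
    | some w' => eqWord u w'

lemma eqWord_sound : ∀ (u w : List (Fin 6)), eqWord u w = true →
    csE6.wordProd u = csE6.wordProd w := by
  intro u
  induction u with
  | nil => intro w h; simp [eqWord] at h; simp [h]
  | cons s u ih =>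
    intro w h
    simp only [eqWord] at h
    split at h
    · cases h
    · rename_i w' hw'
      rw [extractLetter_sound _ _ _ _ hw', csE6.wordProd_cons, ih _ h]

/-- The chain `E₆ ⊃ D₅ ⊃ A₄ ⊃ A₃ ⊃ A₂ ⊃ A₁`: generators of each parabolic subgroup, the index of
a basis vector whose stabiliser is the next subgroup, and minimal coset representatives. -/
def levelsE6 : List (List (Fin 6) × ℕ × List (List (Fin 6))) := [
  ([0, 1, 2, 3, 4, 5], 6, [[],
    [5],
    [4, 5],
    [3, 4, 5],
    [1, 3, 4, 5],
    [2, 3, 4, 5],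
    [2, 1, 3, 4, 5],
    [0, 2, 3, 4, 5],
    [0, 2, 1, 3, 4, 5],
    [3, 2, 1, 3, 4, 5],
    [3, 0, 2, 1, 3, 4, 5],
    [4, 3, 2, 1, 3, 4, 5],
    [2, 3, 0, 2, 1, 3, 4, 5],
    [4, 3, 0, 2, 1, 3, 4, 5],
    [5, 4, 3, 2, 1, 3, 4, 5],
    [4, 2, 3, 0, 2, 1, 3, 4, 5],
    [5, 4, 3, 0, 2, 1, 3, 4, 5],
    [3, 4, 2, 3, 0, 2, 1, 3, 4, 5],
    [5, 4, 2, 3, 0, 2, 1, 3, 4, 5],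
    [1, 3, 4, 2, 3, 0, 2, 1, 3, 4, 5],
    [5, 3, 4, 2, 3, 0, 2, 1, 3, 4, 5],
    [5, 1, 3, 4, 2, 3, 0, 2, 1, 3, 4, 5],
    [4, 5, 3, 4, 2, 3, 0, 2, 1, 3, 4, 5],
    [4, 5, 1, 3, 4, 2, 3, 0, 2, 1, 3, 4, 5],
    [3, 4, 5, 1, 3, 4, 2, 3, 0, 2, 1, 3, 4, 5],
    [2, 3, 4, 5, 1, 3, 4, 2, 3, 0, 2, 1, 3, 4, 5],
    [0, 2, 3, 4, 5, 1, 3, 4, 2, 3, 0, 2, 1, 3, 4, 5]]),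
  ([0, 1, 2, 3, 4], 5, [[],
    [4],
    [3, 4],
    [1, 3, 4],
    [2, 3, 4],
    [2, 1, 3, 4],
    [0, 2, 3, 4],
    [0, 2, 1, 3, 4],
    [3, 2, 1, 3, 4],
    [3, 0, 2, 1, 3, 4],
    [4, 3, 2, 1, 3, 4],
    [2, 3, 0, 2, 1, 3, 4],
    [4, 3, 0, 2, 1, 3, 4],
    [4, 2, 3, 0, 2, 1, 3, 4],
    [3, 4, 2, 3, 0, 2, 1, 3, 4],
    [1, 3, 4, 2, 3, 0, 2, 1, 3, 4]]),
  ([0, 1, 2, 3], 0, [[],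
    [1],
    [3, 1],
    [2, 3, 1],
    [0, 2, 3, 1]]),
  ([0, 2, 3], 4, [[],
    [3],
    [2, 3],
    [0, 2, 3]]),
  ([0, 2], 3, [[],
    [2],
    [0, 2]]),
  ([0], 2, [[],
    [0]])]

/-- All products of coset representatives. -/
def prodsE6 : List (List (Fin 6) × ℕ × List (List (Fin 6))) → List (List (Fin 6))
  | [] => [[]]
  | (_, _, R) :: L => R.flatMap fun r => (prodsE6 L).map (r ++ ·)

/-- Generators of the first level. -/
def gensE6 : List (List (Fin 6) × ℕ × List (List (Fin 6))) → List (Fin 6)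
  | [] => []
  | (J, _, _) :: _ => J

/-- The coset tables close up. -/
def coverOK : List (List (Fin 6) × ℕ × List (List (Fin 6))) → Bool
  | [] => true
  | (J, _, R) :: L => (J.all fun s => R.all fun r =>
      (R.any fun r' => eqWord (s :: r) r' || eqWord r (s :: r')) ||
      ((gensE6 L).any fun s' => eqWord (s :: r) (r ++ [s']))) && coverOK L

lemma coverOK_step : ∀ L, coverOK L = true → ∀ s ∈ gensE6 L, ∀ w ∈ prodsE6 L,
    ∃ w' ∈ prodsE6 L, csE6.simple s * csE6.wordProd w = csE6.wordProd w' := by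
  intro L
  induction L with
  | nil => intro _ s hs; simp [gensE6] at hs
  | cons a L ih =>
    obtain ⟨J, k, R⟩ := a
    intro h s hs w hw
    simp only [coverOK, Bool.and_eq_true, List.all_eq_true] at h
    obtain ⟨h1, h2⟩ := h
    simp only [prodsE6, List.mem_flatMap, List.mem_map] at hw
    obtain ⟨r, hr, u, hu, rfl⟩ := hw
    have h3 := h1 s hs r hr
    simp only [Bool.or_eq_true, List.any_eq_true] at h3
    rcases h3 with ⟨r', hr', h3⟩ | ⟨s', hs', h3⟩
    · refine ⟨r' ++ u, ?_, ?_⟩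
      · simp only [prodsE6, List.mem_flatMap, List.mem_map]
        exact ⟨r', hr', u, hu, rfl⟩
      · have : csE6.simple s * csE6.wordProd r = csE6.wordProd r' := by
          rcases h3 with h3 | h3
          · rw [← csE6.wordProd_cons]; exact eqWord_sound _ _ h3
          · rw [eqWord_sound _ _ h3, csE6.wordProd_cons]; simp
        rw [csE6.wordProd_append, csE6.wordProd_append, ← mul_assoc, this]
    · obtain ⟨u', hu', e⟩ := ih h2 s' hs' u hu
      refine ⟨r ++ u', ?_, ?_⟩
      · simp only [prodsE6, List.mem_flatMap, List.mem_map]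
        exact ⟨r, hr, u', hu', rfl⟩
      · have h4 := eqWord_sound _ _ h3
        rw [csE6.wordProd_cons, csE6.wordProd_append] at h4
        rw [csE6.wordProd_append, csE6.wordProd_append, ← mul_assoc, h4, ← e]
        simp [mul_assoc, csE6.wordProd_cons]

lemma coverOK_levels : coverOK levelsE6 = true := by decide +kernel

lemma nil_mem_prods : ∀ L, (∀ a ∈ L, [] ∈ a.2.2) → [] ∈ prodsE6 L := by
  intro L
  induction L with
  | nil => intro _; simp [prodsE6]
  | cons a L ih =>
    intro h
    simp only [prodsE6, List.mem_flatMap, List.mem_map]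
    exact ⟨[], h a (by simp), [], ih fun b hb => h b (by simp [hb]), rfl⟩

lemma cover_all (g : CoxeterMatrix.E₆.Group) : ∃ w ∈ prodsE6 levelsE6, csE6.wordProd w = g := by
  induction g using csE6.simple_induction_left with
  | one => exact ⟨[], nil_mem_prods _ (by decide), by simp⟩
  | mul_simple_left g i ih =>
    obtain ⟨w, hw, rfl⟩ := ih
    obtain ⟨w', hw', e⟩ := coverOK_step _ coverOK_levels i (by revert i; decide) w hw
    exact ⟨w', hw', e.symm⟩

/-- The Bailey matrix. -/
def baileyB : Matrix (Fin 8) (Fin 8) ℤ :=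
  !![2,-1,-1,-1,0,0,0,1; 1,0,-1,-1,0,0,0,1; 1,-1,0,-1,0,0,0,1; 1,-1,-1,0,0,0,0,1;
         0,0,0,0,1,0,0,0; 0,0,0,0,0,1,0,0; 0,0,0,0,0,0,1,0; 0,0,0,0,0,0,0,1]

/-- The matrices indexed by nodes of the `E₆` diagram. -/
def genMat : Fin 6 → Matrix (Fin 8) (Fin 8) ℤ :=
  ![swapMatrix8 1 2, baileyB, swapMatrix8 2 3, swapMatrix8 3 4, swapMatrix8 4 5, swapMatrix8 5 6]

/-- The action of the generators on vectors given as lists. -/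
def actList : Fin 6 → List ℤ → List ℤ
  | 0, [a, b, c, d, e, f, g, h] => [a, c, b, d, e, f, g, h]
  | 1, [a, b, c, d, e, f, g, h] =>
    [2*a-b-c-d+h, a-c-d+h, a-b-d+h, a-b-c+h, e, f, g, h]
  | 2, [a, b, c, d, e, f, g, h] => [a, b, d, c, e, f, g, h]
  | 3, [a, b, c, d, e, f, g, h] => [a, b, c, e, d, f, g, h]
  | 4, [a, b, c, d, e, f, g, h] => [a, b, c, d, f, e, g, h]
  | 5, [a, b, c, d, e, f, g, h] => [a, b, c, d, e, g, f, h]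
  | _, _ => []

/-- The vector with given list of entries. -/
def vecOf (l : List ℤ) : Fin 8 → ℤ := fun i => l.getD i 0

lemma actList_length (i : Fin 6) (l : List ℤ) (hl : l.length = 8) : (actList i l).length = 8 := by
  match l, hl with
  | [a, b, c, d, e, f, g, h], _ => fin_cases i <;> rfl

lemma swapMatrix8_mulVec (k l : Fin 8) (v : Fin 8 → ℤ) :
    swapMatrix8 k l *ᵥ v = fun i => v (Equiv.swap k l i) := by
  ext i
  simp [swapMatrix8, Matrix.mulVec, dotProduct]

lemma actList_spec (i : Fin 6) (l : List ℤ) (hl : l.length = 8) :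
    genMat i *ᵥ vecOf l = vecOf (actList i l) := by
  match l, hl with
  | [a, b, c, d, e, f, g, h], _ =>
    by_cases hi : i = 1
    · subst hi
      ext j
      fin_cases j <;>
        simp [genMat, baileyB, Matrix.mulVec, dotProduct, Fin.sum_univ_eight, vecOf, actList] <;>
        ring
    · fin_cases i
      all_goals first
        | exact absurd rfl hi
        | (refine (swapMatrix8_mulVec _ _ _).trans ?_
           ext j
           fin_cases j <;> rfl)

/-- The action of a word on lists. -/
def actWord (w : List (Fin 6)) (l : List ℤ) : List ℤ := w.foldr actList l

/-- The matrix of a word. -/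
def matWord (w : List (Fin 6)) : Matrix (Fin 8) (Fin 8) ℤ := (w.map genMat).prod

lemma actWord_length (w : List (Fin 6)) (l : List ℤ) (hl : l.length = 8) :
    (actWord w l).length = 8 := by
  induction w with
  | nil => exact hl
  | cons s w ih => exact actList_length _ _ ih

lemma actWord_spec (w : List (Fin 6)) (l : List ℤ) (hl : l.length = 8) :
    matWord w *ᵥ vecOf l = vecOf (actWord w l) := by
  induction w with
  | nil => simp [matWord, actWord]
  | cons s w ih =>
    have : matWord (s :: w) = genMat s * matWord w := by simp [matWord]
    rw [this, ← Matrix.mulVec_mulVec, ih, actList_spec _ _ (actWord_length w l hl)]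
    rfl

lemma matWord_append (u w : List (Fin 6)) : matWord (u ++ w) = matWord u * matWord w := by
  simp [matWord]

lemma vecOf_inj (l m : List ℤ) (hl : l.length = 8) (hm : m.length = 8)
    (h : vecOf l = vecOf m) : l = m := by
  apply List.ext_getElem (by omega)
  intro i h1 h2
  have := congrFun h ⟨i, by omega⟩
  simpa [vecOf, h1, h2] using this

/-- Basis vectors as lists. -/
def basisList (k : ℕ) : List ℤ := (List.range 8).map fun i => if i = k then 1 else 0

lemma basisList_length (k : ℕ) : (basisList k).length = 8 := by simp [basisList]

lemma vecOf_basis (k : Fin 8) : vecOf (basisList k) = Pi.single k 1 := by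
  ext j
  revert j k
  decide

lemma matWord_eq_one (w : List (Fin 6))
    (h : ∀ k : Fin 8, actWord w (basisList k) = basisList k) : matWord w = 1 := by
  apply Matrix.ext_of_mulVec_single
  intro k
  rw [← vecOf_basis, actWord_spec _ _ (basisList_length _), h]
  simp

/-- Words of the Coxeter relations. -/
def relWord (i j : Fin 6) : List (Fin 6) :=
  (List.replicate (CoxeterMatrix.E₆.M i j) [i, j]).flatten

lemma relWord_ok : ∀ i j : Fin 6, ∀ k : Fin 8,
    actWord (relWord i j) (basisList k) = basisList k := by decide +kernel

lemma genMat_liftable : CoxeterMatrix.E₆.IsLiftable genMat := by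
  intro i j
  have h := matWord_eq_one _ (relWord_ok i j)
  rw [← h]
  simp [matWord, relWord, List.map_flatten, List.prod_flatten]

/-- The representation of the Coxeter group. -/
noncomputable def repE6 : CoxeterMatrix.E₆.Group →* Matrix (Fin 8) (Fin 8) ℤ :=
  csE6.lift ⟨genMat, genMat_liftable⟩

lemma repE6_simple (i : Fin 6) : repE6 (csE6.simple i) = genMat i :=
  csE6.lift_apply_simple genMat_liftable i

lemma repE6_word (w : List (Fin 6)) : repE6 (csE6.wordProd w) = matWord w := by
  induction w with
  | nil => simp [matWord]
  | cons s w ih => rw [csE6.wordProd_cons, map_mul, ih, repE6_simple]; simp [matWord]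

/-- The vectors separate cosets. -/
def sepOK : List (List (Fin 6) × ℕ × List (List (Fin 6))) → Bool
  | [] => true
  | (_, k, R) :: L => decide ((R.map fun r => actWord r (basisList k)).Nodup) &&
      (L.all fun a => a.2.2.all fun r => decide (actWord r (basisList k) = basisList k)) && sepOK L

lemma sepOK_levels : sepOK levelsE6 = true := by decide +kernel

lemma prods_fix (l : List ℤ) : ∀ L : List (List (Fin 6) × ℕ × List (List (Fin 6))),
    (∀ a ∈ L, ∀ r ∈ a.2.2, actWord r l = l) → ∀ w ∈ prodsE6 L, actWord w l = l := by
  intro L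
  induction L with
  | nil => intro _ w hw; simp [prodsE6] at hw; subst hw; rfl
  | cons a L ih =>
    intro h w hw
    simp only [prodsE6, List.mem_flatMap, List.mem_map] at hw
    obtain ⟨r, hr, u, hu, rfl⟩ := hw
    have e1 := ih (fun b hb => h b (by simp [hb])) u hu
    have e2 := h a (by simp) r hr
    simp only [actWord, List.foldr_append] at e1 e2 ⊢
    rw [e1, e2]

lemma matWord_left_cancel (r u w : List (Fin 6)) (h : matWord (r ++ u) = matWord (r ++ w)) :
    matWord u = matWord w := by
  have := congrArg (fun m => repE6 (csE6.wordProd r)⁻¹ * m) h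
  simp only [matWord_append, ← repE6_word r, ← mul_assoc, ← map_mul, inv_mul_cancel, map_one,
    one_mul] at this
  exact this

lemma prods_nodup : ∀ L, sepOK L = true → ((prodsE6 L).map matWord).Nodup := by
  intro L
  induction L with
  | nil => intro _; simp [prodsE6]
  | cons a L ih =>
    obtain ⟨J, k, R⟩ := a
    intro h
    simp only [sepOK, Bool.and_eq_true, List.all_eq_true, decide_eq_true_eq] at h
    obtain ⟨⟨h1, h2⟩, h3⟩ := h
    have hfix := prods_fix (basisList k) L h2
    have ih' := ih h3
    simp only [prodsE6, List.map_flatMap, List.map_map]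
    rw [List.nodup_flatMap]
    constructor
    · intro r _
      refine List.Nodup.map_on ?_ (List.Nodup.of_map _ ih')
      intro x hx y hy hxy
      exact List.inj_on_of_nodup_map ih' hx hy (matWord_left_cancel r x y hxy)
    · rw [List.Nodup, List.pairwise_map] at h1
      refine h1.imp ?_
      intro r r' hne m hm hm'
      simp only [List.mem_map, Function.comp] at hm hm'
      obtain ⟨u, hu, rfl⟩ := hm
      obtain ⟨u', hu', e⟩ := hm'
      apply hne
      have e2 := congrArg (fun m => m *ᵥ vecOf (basisList k)) e
      simp only [actWord_spec _ _ (basisList_length k)] at e2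
      have e3 := vecOf_inj _ _ (actWord_length _ _ (basisList_length k))
        (actWord_length _ _ (basisList_length k)) e2
      have f1 := hfix u hu
      have f2 := hfix u' hu'
      simp only [actWord, List.foldr_append] at e3 f1 f2 ⊢
      rw [f1, f2] at e3
      exact e3.symm

lemma prods_length : ∀ L, (prodsE6 L).length = (L.map fun a => a.2.2.length).prod := by
  intro L
  induction L with
  | nil => rfl
  | cons a L ih => simp [prodsE6, List.length_flatMap, ih]

lemma prods_levels_length : (prodsE6 levelsE6).length = 51840 := by
  rw [prods_length]; decide +kernel

lemma repE6_injective : Function.Injective repE6 := by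
  intro g g' h
  obtain ⟨w, hw, rfl⟩ := cover_all g
  obtain ⟨w', hw', rfl⟩ := cover_all g'
  rw [repE6_word, repE6_word] at h
  rw [List.inj_on_of_nodup_map (prods_nodup _ sepOK_levels) hw hw' h]

lemma card_E6 : Nat.card CoxeterMatrix.E₆.Group = 51840 := by
  have hn : ((prodsE6 levelsE6).map csE6.wordProd).Nodup := by
    apply List.Nodup.of_map repE6
    rw [List.map_map]
    have : (repE6 ∘ csE6.wordProd) = matWord := funext repE6_word
    rw [this]
    exact prods_nodup _ sepOK_levels
  classical
  let e := hn.getEquivOfForallMemList _ (fun g => by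
    obtain ⟨w, hw, e⟩ := cover_all g
    exact List.mem_map.2 ⟨w, hw, e⟩)
  rw [← Nat.card_congr e, Nat.card_eq_fintype_card, Fintype.card_fin, List.length_map,
    prods_levels_length]

/-- The group generated by the Bailey transformation matrix `B` and the
permutation matrices `S₁, …, S₅` is isomorphic to the Weyl group `W(E₆)`,
of order 51840.  (All generators are involutions, so the submonoid they
generate is a group.) -/
theorem bailey_group_iso_WE6 :
    let B : Matrix (Fin 8) (Fin 8) ℤ :=
      !![2,-1,-1,-1,0,0,0,1; 1,0,-1,-1,0,0,0,1; 1,-1,0,-1,0,0,0,1; 1,-1,-1,0,0,0,0,1;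
         0,0,0,0,1,0,0,0; 0,0,0,0,0,1,0,0; 0,0,0,0,0,0,1,0; 0,0,0,0,0,0,0,1]
    let S₁ := swapMatrix8 1 2
    let S₂ := swapMatrix8 2 3
    let S₃ := swapMatrix8 3 4
    let S₄ := swapMatrix8 4 5
    let S₅ := swapMatrix8 5 6
    let G : Submonoid (Matrix (Fin 8) (Fin 8) ℤ) :=
      Submonoid.closure {B, S₁, S₂, S₃, S₄, S₅}
    Nonempty (G ≃* CoxeterMatrix.E₆.Group) ∧ Nat.card G = 51840 := by
  intro B S₁ S₂ S₃ S₄ S₅ G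
  have hG : MonoidHom.mrange repE6 = G := by
    rw [MonoidHom.mrange_eq_map, ← csE6.submonoid_closure_range_simple, MonoidHom.map_mclosure]
    change Submonoid.closure _ = Submonoid.closure _
    congr 1
    rw [← Set.range_comp]
    have : (repE6 ∘ csE6.simple) = genMat := funext repE6_simple
    rw [this]
    ext m
    simp only [Set.mem_range, Set.mem_insert_iff, Set.mem_singleton_iff]
    constructor
    · rintro ⟨i, rfl⟩
      fin_cases i
      · exact Or.inr (Or.inl rfl)
      · exact Or.inl rfl
      · exact Or.inr (Or.inr (Or.inl rfl))
      · exact Or.inr (Or.inr (Or.inr (Or.inl rfl)))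
      · exact Or.inr (Or.inr (Or.inr (Or.inr (Or.inl rfl))))
      · exact Or.inr (Or.inr (Or.inr (Or.inr (Or.inr rfl))))
    · rintro (rfl | rfl | rfl | rfl | rfl | rfl)
      exacts [⟨1, rfl⟩, ⟨0, rfl⟩, ⟨2, rfl⟩, ⟨3, rfl⟩, ⟨4, rfl⟩, ⟨5, rfl⟩]
  have hb : Function.Bijective repE6.mrangeRestrict :=
    ⟨fun a b h => repE6_injective (congrArg Subtype.val h), repE6.mrangeRestrict_surjective⟩
  have e : CoxeterMatrix.E₆.Group ≃* G :=
    (MulEquiv.ofBijective _ hb).trans (MulEquiv.submonoidCongr hG)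
  exact ⟨⟨e.symm⟩, by rw [← Nat.card_congr e.toEquiv, card_E6]⟩
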